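/- Let Ω ⊆ ℝⁿ be open, let F_m, F : Ω × ℝ × ℝⁿ × Sym(n) → ℝ be continuous with F_m → F locally uniformly, and let u_m : Ω → ℝ be upper semicontinuous viscosity subsolutions of F_m(·,u_m,Du_m,D²u_m) ≥ 0 on Ω. Suppose u_m minus-Gamma-converges to a function u on Ω and u is upper semicontinuous. Then u is a viscosity subsolution of F(·,u,Du,D²u) ≥ 0 on Ω. -/

import Mathlib

/-!
Perturbed test functions. Let `(p, X) ∈ J²⁺u(x₀)` and `ε > 0`, put `Y = X + 4ε I` and
`φ(z) = p·z + ½⟨Yz, z⟩`, so that `u(x) - φ(x - x₀) ≤ u(x₀) - ε|x - x₀|²` on a small closed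
ball `B` about `x₀`: the strictness comes from the extra `2ε|z|²` in `φ`. Let `y_m` maximize the
upper semicontinuous function `u_m - φ(· - x₀)` on `B`. Comparing with the recovery sequence at
`x₀` and using the limsup half of minus-Gamma convergence, every cluster point of `(y_m)` is a
maximizer of `u - φ(· - x₀)`, hence equals `x₀`; so `y_m → x₀` by compactness, and the same
comparison gives `u_m(y_m) → u(x₀)` (`exists_maximizers`). Once `y_m` is interior to `B`, the
quadratic `φ` gives `(p + Y(y_m - x₀), Y) ∈ J²⁺u_m(y_m)` (`J2plus_of_isMaxOn`). Passing to the
limit in `F_m ≥ 0` yields `F(x₀, u(x₀), p, X + 4ε I) ≥ 0`, and `ε → 0` concludes.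

The limsup condition is stated along full sequences; `MinusGammaConv.eventually_le` turns it
into an estimate that is uniform over a neighbourhood, which is the form used for cluster points.
-/


open scoped RealInnerProductSpace
open Filter

noncomputable section

/-- The quadratic form `z ↦ ⟨Xz, z⟩` of a matrix `X` on `ℝⁿ`. -/
def quadForm {n : ℕ} (X : Matrix (Fin n) (Fin n) ℝ) (z : EuclideanSpace ℝ (Fin n)) : ℝ :=
  ⟪Matrix.toEuclideanLin X z, z⟫

/-- Second-order super-jet `J²⁺u(x)` of `u : Ω → ℝ` at `x` (relative to the set `Ω`):
`(p,X) ∈ J²⁺u(x)` iff `X` is symmetric and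
`u(x+z) ≤ u(x) + p·z + ½⟨Xz,z⟩ + o(|z|²)` as `z → 0` within `Ω`. -/
def J2plus {n : ℕ} (Ω : Set (EuclideanSpace ℝ (Fin n))) (u : EuclideanSpace ℝ (Fin n) → ℝ)
    (x p : EuclideanSpace ℝ (Fin n)) (X : Matrix (Fin n) (Fin n) ℝ) : Prop :=
  X.IsSymm ∧
  ∀ ε > 0, ∃ δ > 0, ∀ z : EuclideanSpace ℝ (Fin n), ‖z‖ < δ → x + z ∈ Ω →
    u (x + z) ≤ u x + ⟪p, z⟫ + (1 / 2) * quadForm X z + ε * ‖z‖ ^ 2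

/-- Second-order sub-jet `J²⁻u(x)` of `u : Ω → ℝ` at `x` (relative to the set `Ω`). -/
def J2minus {n : ℕ} (Ω : Set (EuclideanSpace ℝ (Fin n))) (u : EuclideanSpace ℝ (Fin n) → ℝ)
    (x p : EuclideanSpace ℝ (Fin n)) (X : Matrix (Fin n) (Fin n) ℝ) : Prop :=
  X.IsSymm ∧
  ∀ ε > 0, ∃ δ > 0, ∀ z : EuclideanSpace ℝ (Fin n), ‖z‖ < δ → x + z ∈ Ω →
    u x + ⟪p, z⟫ + (1 / 2) * quadForm X z - ε * ‖z‖ ^ 2 ≤ u (x + z)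

/-- `u` is a viscosity subsolution of `F(·,u,Du,D²u) = 0` on `Ω`
(`F` given on tuples `(x, r, p, X)`). -/
def ViscSubsol {n : ℕ} (Ω : Set (EuclideanSpace ℝ (Fin n)))
    (F : EuclideanSpace ℝ (Fin n) × ℝ × EuclideanSpace ℝ (Fin n) ×
      Matrix (Fin n) (Fin n) ℝ → ℝ) (u : EuclideanSpace ℝ (Fin n) → ℝ) : Prop :=
  ∀ x ∈ Ω, ∀ p X, J2plus Ω u x p X → 0 ≤ F (x, u x, p, X)

/-- `u_m` minus-Gamma-converges to `u` on `Ω`: for every `x ∈ Ω`,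
(a) for every sequence `x_m → x` in `Ω`, `limsup u_m(x_m) ≤ u(x)`, and
(b) there is a sequence `x̂_m → x` in `Ω` with `u_m(x̂_m) → u(x)`. -/
def MinusGammaConv {n : ℕ} (Ω : Set (EuclideanSpace ℝ (Fin n)))
    (um : ℕ → EuclideanSpace ℝ (Fin n) → ℝ) (u : EuclideanSpace ℝ (Fin n) → ℝ) : Prop :=
  ∀ x ∈ Ω,
    (∀ xm : ℕ → EuclideanSpace ℝ (Fin n), (∀ m, xm m ∈ Ω) → Tendsto xm atTop (nhds x) →
      ∀ ε > (0 : ℝ), ∀ᶠ m in atTop, um m (xm m) ≤ u x + ε) ∧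
    (∃ xm : ℕ → EuclideanSpace ℝ (Fin n), (∀ m, xm m ∈ Ω) ∧ Tendsto xm atTop (nhds x) ∧
      Tendsto (fun m => um m (xm m)) atTop (nhds (u x)))

theorem quadForm_add_smul_one {n : ℕ} (X : Matrix (Fin n) (Fin n) ℝ) (c : ℝ)
    (z : EuclideanSpace ℝ (Fin n)) :
    quadForm (X + c • 1) z = quadForm X z + c * ‖z‖ ^ 2 := by
  have h1 : Matrix.toEuclideanLin (1 : Matrix (Fin n) (Fin n) ℝ) z = z := by
    simp
  simp only [quadForm, map_add, map_smul, LinearMap.add_apply, LinearMap.smul_apply, h1,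
    inner_add_left, real_inner_smul_left, real_inner_self_eq_norm_sq]

theorem quadForm_add {n : ℕ} {Y : Matrix (Fin n) (Fin n) ℝ} (hY : Y.IsSymm)
    (a b : EuclideanSpace ℝ (Fin n)) :
    quadForm Y (a + b) = quadForm Y a + 2 * ⟪Matrix.toEuclideanLin Y a, b⟫ + quadForm Y b := by
  have hH : Y.IsHermitian := by
    rw [Matrix.IsHermitian, Matrix.conjTranspose_eq_transpose_of_trivial]; exact hY
  have hs := Matrix.isSymmetric_toEuclideanLin_iff.mpr hH
  have hab : ⟪Matrix.toEuclideanLin Y b, a⟫ = ⟪Matrix.toEuclideanLin Y a, b⟫ := by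
    rw [hs b a, real_inner_comm]
  simp only [quadForm, map_add, inner_add_left, inner_add_right, hab]
  ring

theorem continuous_quadForm {n : ℕ} (Y : Matrix (Fin n) (Fin n) ℝ) : Continuous (quadForm Y) :=
  (LinearMap.continuous_of_finiteDimensional (Matrix.toEuclideanLin Y)).inner continuous_id

/-- The limsup half of minus-Gamma convergence, uniformly near `y`. If it failed, there would be
points `z_k → y` and indices `m_k → ∞` with `u_{m_k}(z_k) > u(y) + η`; after thinning to strictly
increasing `m_k` and filling the remaining indices with `y`, this is a full sequence violating
the definition. -/
theorem MinusGammaConv.eventually_le {n : ℕ} {Ω : Set (EuclideanSpace ℝ (Fin n))}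
    {um : ℕ → EuclideanSpace ℝ (Fin n) → ℝ} {u : EuclideanSpace ℝ (Fin n) → ℝ}
    (h : MinusGammaConv Ω um u) {y : EuclideanSpace ℝ (Fin n)} (hy : y ∈ Ω) {η : ℝ}
    (hη : 0 < η) :
    ∀ᶠ q in atTop ×ˢ nhdsWithin y Ω, um q.1 q.2 ≤ u y + η := by
  by_contra hcon
  obtain ⟨s, hs, hsn⟩ := exists_seq_forall_of_frequently (not_eventually.mp hcon)
  have hs1 : Tendsto (fun k => (s k).1) atTop atTop := tendsto_fst.comp hs
  have hs2 : Tendsto (fun k => (s k).2) atTop (nhdsWithin y Ω) := tendsto_snd.comp hs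
  obtain ⟨hs2y, hs2Ω⟩ := tendsto_nhdsWithin_iff.mp hs2
  obtain ⟨N, hN⟩ := eventually_atTop.mp hs2Ω
  obtain ⟨ψ, hψ, hmono⟩ := strictMono_subseq_of_tendsto_atTop
    (hs1.comp (tendsto_add_atTop_nat N))
  -- `g k` is the index `m_k` and `z k` the corresponding bad point of `Ω`.
  set g : ℕ → ℕ := fun k => (s (ψ k + N)).1 with hg
  set z : ℕ → EuclideanSpace ℝ (Fin n) := fun k => (s (ψ k + N)).2 with hz
  have hgm : StrictMono g := hmono
  have hzΩ : ∀ k, z k ∈ Ω := fun k => hN _ (Nat.le_add_left _ _)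
  have hzy : Tendsto z atTop (nhds y) :=
    hs2y.comp ((tendsto_add_atTop_nat N).comp hψ.tendsto_atTop)
  set xm : ℕ → EuclideanSpace ℝ (Fin n) := Function.extend g z (fun _ => y) with hxm
  have hxg : ∀ k, xm (g k) = z k := fun k => hgm.injective.extend_apply z _ k
  have hxn : ∀ m, (¬ ∃ k, g k = m) → xm m = y := fun m hm => Function.extend_apply' _ _ _ hm
  have hxΩ : ∀ m, xm m ∈ Ω := by
    intro m
    by_cases hm : ∃ k, g k = m
    · obtain ⟨k, rfl⟩ := hm
      rw [hxg]; exact hzΩ k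
    · rw [hxn m hm]; exact hy
  have hxy : Tendsto xm atTop (nhds y) := by
    rw [tendsto_def]
    intro U hU
    obtain ⟨K, hK⟩ := eventually_atTop.mp (hzy hU)
    filter_upwards [eventually_ge_atTop (g K)] with m hmK
    by_cases hm : ∃ k, g k = m
    · obtain ⟨k, rfl⟩ := hm
      rw [Set.mem_preimage, hxg]
      exact hK k (hgm.le_iff_le.mp hmK)
    · rw [Set.mem_preimage, hxn m hm]; exact mem_of_mem_nhds hU
  obtain ⟨k, hk⟩ := (hgm.tendsto_atTop.eventually ((h y hy).1 xm hxΩ hxy η hη)).exists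
  rw [hxg] at hk
  exact hsn _ hk

/-- An interior maximum of `v - φ(· - x)` with `φ(z) = p·z + ½⟨Yz, z⟩` gives an exact super-jet
of `v`, namely the gradient and Hessian of `φ(· - x)` at that point. -/
theorem J2plus_of_isMaxOn {n : ℕ} (Ω : Set (EuclideanSpace ℝ (Fin n)))
    {v : EuclideanSpace ℝ (Fin n) → ℝ} {x y p : EuclideanSpace ℝ (Fin n)}
    {Y : Matrix (Fin n) (Fin n) ℝ} (hY : Y.IsSymm) {B : Set (EuclideanSpace ℝ (Fin n))}
    (hB : B ∈ nhds y)
    (hmax : IsMaxOn (fun t => v t - (⟪p, t - x⟫ + (1 / 2) * quadForm Y (t - x))) B y) :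
    J2plus Ω v y (p + Matrix.toEuclideanLin Y (y - x)) Y := by
  refine ⟨hY, fun ε hε => ?_⟩
  obtain ⟨δ, hδ, hball⟩ := Metric.mem_nhds_iff.mp hB
  refine ⟨δ, hδ, fun z hz _ => ?_⟩
  have hmem : y + z ∈ B := hball (by simpa [Metric.mem_ball, dist_eq_norm] using hz)
  have hle := isMaxOn_iff.mp hmax _ hmem
  have hshift : y + z - x = (y - x) + z := by abel
  simp only [hshift, quadForm_add hY, inner_add_right] at hle
  rw [inner_add_left]
  have : 0 ≤ ε * ‖z‖ ^ 2 := by positivity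
  linarith

/-- Stability of strict maxima: if `u - φ` has a strict maximum at `x₀` on the compact
neighbourhood `B`, with quadratic gap `ε|x - x₀|²`, then the maximizers `y_m` of `u_m - φ` on `B`
converge to `x₀` and their values `u_m(y_m)` converge to `u(x₀)`. -/
theorem exists_maximizers {n : ℕ} {Ω : Set (EuclideanSpace ℝ (Fin n))}
    {um : ℕ → EuclideanSpace ℝ (Fin n) → ℝ} {u : EuclideanSpace ℝ (Fin n) → ℝ}
    (humu : ∀ m, UpperSemicontinuousOn (um m) Ω) (h : MinusGammaConv Ω um u)
    {x₀ : EuclideanSpace ℝ (Fin n)} {B : Set (EuclideanSpace ℝ (Fin n))} (hBΩ : B ⊆ Ω)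
    (hBc : IsCompact B) (hB : B ∈ nhds x₀) {φ : EuclideanSpace ℝ (Fin n) → ℝ}
    (hφ : Continuous φ) {ε : ℝ} (hε : 0 < ε)
    (hstrict : ∀ x ∈ B, u x - φ x ≤ u x₀ - φ x₀ - ε * ‖x - x₀‖ ^ 2) :
    ∃ y : ℕ → EuclideanSpace ℝ (Fin n), (∀ m, y m ∈ B) ∧
      (∀ m, IsMaxOn (fun t => um m t - φ t) B (y m)) ∧ Tendsto y atTop (nhds x₀) ∧
      Tendsto (fun m => um m (y m)) atTop (nhds (u x₀)) := by
  have hx₀B : x₀ ∈ B := mem_of_mem_nhds hB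
  have hx₀ : x₀ ∈ Ω := hBΩ hx₀B
  have hex : ∀ m, ∃ y ∈ B, IsMaxOn (fun t => um m t - φ t) B y := fun m => by
    refine UpperSemicontinuousOn.exists_isMaxOn ⟨x₀, hx₀B⟩ hBc ?_
    simpa only [sub_eq_add_neg, Pi.neg_apply] using
      (((humu m).mono hBΩ).add hφ.neg.continuousOn.upperSemicontinuousOn)
  choose y hyB hymax using hex
  obtain ⟨xh, -, hxh, hxhu⟩ := (h x₀ hx₀).2
  have hlow : ∀ᶠ m in atTop, um m (xh m) - φ (xh m) ≤ um m (y m) - φ (y m) := by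
    filter_upwards [hxh hB] with m hm using isMaxOn_iff.mp (hymax m) _ hm
  have hrec : Tendsto (fun m => um m (xh m) - φ (xh m)) atTop (nhds (u x₀ - φ x₀)) :=
    hxhu.sub ((hφ.tendsto x₀).comp hxh)
  have hyt : Tendsto y atTop (nhds x₀) := by
    refine hBc.tendsto_nhds_of_unique_mapClusterPt (Eventually.of_forall hyB) ?_
    intro c hc hcl
    have key : ∀ η > 0, ε * ‖c - x₀‖ ^ 2 ≤ 0 + η := by
      intro η hη
      have hη3 : 0 < η / 3 := by positivity
      obtain ⟨P, hP, Q, hQ, hPQ⟩ := eventually_prod_iff.mp (h.eventually_le (hBΩ hc) hη3)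
      have hQ' : ∀ᶠ t in nhds c, t ∈ Ω → Q t := eventually_nhdsWithin_iff.mp hQ
      have hφc : ∀ᶠ t in nhds c, φ c - η / 3 < φ t :=
        (hφ.tendsto c).eventually_const_lt (by linarith)
      have hr : ∀ᶠ m in atTop, u x₀ - φ x₀ - η / 3 < um m (xh m) - φ (xh m) :=
        hrec.eventually_const_lt (by linarith)
      obtain ⟨m, ⟨h1, h2⟩, h3, h4, h5⟩ :=
        ((hcl.frequently (hQ'.and hφc)).and_eventually (hP.and (hr.and hlow))).exists
      have h6 : um m (y m) ≤ u c + η / 3 := hPQ h3 (h1 (hBΩ (hyB m)))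
      have h7 := hstrict c hc
      linarith
    have h0 : ε * ‖c - x₀‖ ^ 2 ≤ 0 := le_of_forall_pos_le_add key
    have h1 : ‖c - x₀‖ ^ 2 ≤ 0 := by
      by_contra hne
      have := mul_pos hε (not_le.mp hne)
      linarith
    have h2 : ‖c - x₀‖ = 0 := by nlinarith [norm_nonneg (c - x₀), sq_nonneg ‖c - x₀‖]
    exact sub_eq_zero.mp (norm_eq_zero.mp h2)
  refine ⟨y, hyB, hymax, hyt, ?_⟩
  have hlim : Tendsto (fun m => um m (xh m) - φ (xh m) + φ (y m)) atTop (nhds (u x₀)) := by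
    simpa using hrec.add ((hφ.tendsto x₀).comp hyt)
  rw [tendsto_order]
  constructor
  · intro a ha
    filter_upwards [hlim.eventually_const_lt ha, hlow] with m h1 h2
    linarith
  · intro b hb
    filter_upwards [(h x₀ hx₀).1 y (fun m => hBΩ (hyB m)) hyt ((b - u x₀) / 2) (by linarith)]
      with m hm
    linarith

/-- 1-sided stability of subsolutions: if `F_m → F` locally uniformly,
`u_m` are upper semicontinuous viscosity subsolutions of `F_m ≥ 0`, `u_m` minus-Gamma
converges to an upper semicontinuous `u`, then `u` is a viscosity subsolution of `F ≥ 0`. -/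
theorem stmt_9 {n : ℕ} (Ω : Set (EuclideanSpace ℝ (Fin n))) (hΩ : IsOpen Ω)
    (Fm : ℕ → EuclideanSpace ℝ (Fin n) × ℝ × EuclideanSpace ℝ (Fin n) ×
      Matrix (Fin n) (Fin n) ℝ → ℝ)
    (F : EuclideanSpace ℝ (Fin n) × ℝ × EuclideanSpace ℝ (Fin n) ×
      Matrix (Fin n) (Fin n) ℝ → ℝ)
    (hFmc : ∀ m, ContinuousOn (Fm m)
      (Ω ×ˢ (Set.univ : Set (ℝ × EuclideanSpace ℝ (Fin n) × Matrix (Fin n) (Fin n) ℝ))))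
    (hFc : ContinuousOn F
      (Ω ×ˢ (Set.univ : Set (ℝ × EuclideanSpace ℝ (Fin n) × Matrix (Fin n) (Fin n) ℝ))))
    (hFconv : TendstoLocallyUniformlyOn Fm F atTop
      (Ω ×ˢ (Set.univ : Set (ℝ × EuclideanSpace ℝ (Fin n) × Matrix (Fin n) (Fin n) ℝ))))
    (um : ℕ → EuclideanSpace ℝ (Fin n) → ℝ) (u : EuclideanSpace ℝ (Fin n) → ℝ)
    (humu : ∀ m, UpperSemicontinuousOn (um m) Ω)
    (hsub : ∀ m, ViscSubsol Ω (Fm m) (um m))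
    (hgamma : MinusGammaConv Ω um u)
    (huusc : UpperSemicontinuousOn u Ω) :
    ViscSubsol Ω F u := by
  intro x₀ hx₀ p X hX
  set S : Set (EuclideanSpace ℝ (Fin n) × ℝ × EuclideanSpace ℝ (Fin n) ×
    Matrix (Fin n) (Fin n) ℝ) := Ω ×ˢ Set.univ with hS
  have main : ∀ ε > (0 : ℝ), 0 ≤ F (x₀, u x₀, p, X + (4 * ε) • 1) := by
    intro ε hε
    set Y : Matrix (Fin n) (Fin n) ℝ := X + (4 * ε) • 1 with hYdef
    have hY : Y.IsSymm := hX.1.add (Matrix.isSymm_one.smul _)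
    obtain ⟨δ, hδ, hjet⟩ := hX.2 ε hε
    obtain ⟨ρ, hρ, hρΩ⟩ := Metric.isOpen_iff.mp hΩ x₀ hx₀
    obtain ⟨r, hr, hrm⟩ := exists_between (lt_min hδ hρ)
    have hBΩ : Metric.closedBall x₀ r ⊆ Ω :=
      (Metric.closedBall_subset_ball (hrm.trans_le (min_le_right _ _))).trans hρΩ
    set φ : EuclideanSpace ℝ (Fin n) → ℝ :=
      fun t => ⟪p, t - x₀⟫ + (1 / 2) * quadForm Y (t - x₀) with hφdef
    have hsubc : Continuous fun t : EuclideanSpace ℝ (Fin n) => t - x₀ :=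
      continuous_id.sub continuous_const
    have hφ : Continuous φ := (continuous_const.inner hsubc).add
      (continuous_const.mul ((continuous_quadForm Y).comp hsubc))
    have hφ0 : φ x₀ = 0 := by simp [hφdef, quadForm]
    have hstrict : ∀ x ∈ Metric.closedBall x₀ r,
        u x - φ x ≤ u x₀ - φ x₀ - ε * ‖x - x₀‖ ^ 2 := by
      intro x hx
      have hxr : ‖x - x₀‖ ≤ r := by simpa [dist_eq_norm] using hx
      have hj := hjet (x - x₀) (hxr.trans_lt (hrm.trans_le (min_le_left _ _)))
        (by simpa using hBΩ hx)
      rw [add_sub_cancel] at hj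
      simp only [hφ0]
      simp only [hφdef, hYdef, quadForm_add_smul_one]
      linarith
    obtain ⟨y, hyB, hymax, hyt, hyu⟩ := exists_maximizers humu hgamma hBΩ
      (isCompact_closedBall x₀ r) (Metric.closedBall_mem_nhds x₀ hr) hφ hε hstrict
    have hgrad : Tendsto (fun m => p + Matrix.toEuclideanLin Y (y m - x₀)) atTop (nhds p) := by
      have hc : Continuous fun t => p + Matrix.toEuclideanLin Y (t - x₀) :=
        continuous_const.add
          ((LinearMap.continuous_of_finiteDimensional (Matrix.toEuclideanLin Y)).comp hsubc)
      simpa [Function.comp_def] using (hc.tendsto x₀).comp hyt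
    have hpt : Tendsto
        (fun m => (y m, um m (y m), p + Matrix.toEuclideanLin Y (y m - x₀), Y)) atTop
        (nhdsWithin (x₀, u x₀, p, Y) S) :=
      tendsto_nhdsWithin_iff.mpr
        ⟨hyt.prodMk_nhds (hyu.prodMk_nhds (hgrad.prodMk_nhds tendsto_const_nhds)),
          Eventually.of_forall fun m => ⟨hBΩ (hyB m), Set.mem_univ _⟩⟩
    have hmem : (x₀, u x₀, p, Y) ∈ S := ⟨hx₀, Set.mem_univ _⟩
    refine ge_of_tendsto (hFconv.tendsto_comp (hFc _ hmem) hmem hpt) ?_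
    filter_upwards [hyt (Metric.ball_mem_nhds x₀ hr)] with m hm
    exact hsub m _ (hBΩ (hyB m)) _ _ (J2plus_of_isMaxOn Ω hY
      (mem_of_superset (Metric.isOpen_ball.mem_nhds hm) Metric.ball_subset_closedBall) (hymax m))
  have hmem : (x₀, u x₀, p, X) ∈ S := ⟨hx₀, Set.mem_univ _⟩
  have hXt : Tendsto (fun ε : ℝ => X + (4 * ε) • (1 : Matrix (Fin n) (Fin n) ℝ))
      (nhdsWithin 0 (Set.Ioi 0)) (nhds X) := by
    have hc : Continuous fun ε : ℝ => X + (4 * ε) • (1 : Matrix (Fin n) (Fin n) ℝ) := by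
      fun_prop
    simpa using (hc.tendsto 0).mono_left nhdsWithin_le_nhds
  have hpt : Tendsto (fun ε : ℝ => (x₀, u x₀, p, X + (4 * ε) • (1 : Matrix (Fin n) (Fin n) ℝ)))
      (nhdsWithin 0 (Set.Ioi 0)) (nhdsWithin (x₀, u x₀, p, X) S) :=
    tendsto_nhdsWithin_iff.mpr
      ⟨tendsto_const_nhds.prodMk_nhds (tendsto_const_nhds.prodMk_nhds
        (tendsto_const_nhds.prodMk_nhds hXt)),
        Eventually.of_forall fun _ => ⟨hx₀, Set.mem_univ _⟩⟩
  refine ge_of_tendsto (Tendsto.comp (hFc _ hmem) hpt) ?_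
  filter_upwards [self_mem_nhdsWithin] with ε hε using main ε hε

end
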